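/- Let p and q be prime integers with p ≠ q, k ≥ 0 an integer, and let Λ be a finite subgroup of (ℝ/ℤ)^{d+1} which is non-pyramidal and has δ-polynomial 1 + t^{k+1} + t^{2(k+1)} + ⋯ + t^{(pq−1)(k+1)}. Then one of the following holds, where in each case the stated generator is taken after a suitable permutation of the coordinates: (1) d = pq(k+1) − 1 and Λ is the cyclic subgroup generated by (1/(pq), …, 1/(pq)); (2) d = p(q+1)(k+1) − 1 and Λ is the cyclic subgroup generated by the element whose first p(k+1) coordinates equal 1/p and whose last pq(k+1) coordinates equal 1/q; (3) d = (p+1)q(k+1) − 1 and Λ is the cyclic subgroup generated by the element whose first q(k+1) coordinates equal 1/q and whose last pq(k+1) coordinates equal 1/p; (4) d = (pq + p − 1)(k+1) − 1 and Λ is the cyclic subgroup generated by the element whose first (pq−1)(k+1) coordinates equal 1/q and whose last p(k+1) coordinates equal 1/(pq); (5) d = (pq + q − 1)(k+1) − 1 and Λ is the cyclic subgroup generated by the element whose first (pq−1)(k+1) coordinates equal 1/p and whose last q(k+1) coordinates equal 1/(pq). -/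

import Mathlib

open scoped BigOperators

local instance : Fact ((0:ℝ) < 1) := ⟨one_pos⟩

noncomputable def fracR (x : AddCircle (1:ℝ)) : ℝ :=
  ((AddCircle.equivIco 1 0) x : ℝ)

noncomputable def ht {ι : Type*} [Fintype ι] (x : ι → AddCircle (1:ℝ)) : ℝ :=
  ∑ i, fracR (x i)

/-- `Λ` has δ-polynomial `1 + t^step + t^(2*step) + ⋯ + t^((v-1)*step)` :
the height map is a bijection from `Λ` onto `{j*step : 0 ≤ j ≤ v-1}`. -/
def HasDeltaPoly {ι : Type*} [Fintype ι] (v step : ℕ)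
    (Λ : Set (ι → AddCircle (1:ℝ))) : Prop :=
  Set.BijOn ht Λ {y : ℝ | ∃ j : ℕ, j < v ∧ y = (j : ℝ) * (step : ℝ)}

def NonPyramidal {ι : Type*} [Fintype ι] (Λ : Set (ι → AddCircle (1:ℝ))) : Prop :=
  ∀ i : ι, ∃ x ∈ Λ, x i ≠ 0

/-!
Write `s` for the step. If `x ≠ 0` in `Λ` has order `n`, the `n` distinct heights on `⟨x⟩` force
some `y ∈ ⟨x⟩` to have height at least `(n - 1) s`, so `ht y + ht (-y)`, the number of nonzero
coordinates of `y`, is at least `n s`. As every nonzero coordinate of `x` is at least `1 / n`, the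
element of height `s` attains equality everywhere: it has exactly `n s` nonzero coordinates, all
equal to `1 / n`. Dually, the element of maximal height is `-g`, where `g = (1 / n_i)` and `n_i` is
the order of the projection of `Λ` to coordinate `i`. For squarefree `v`, `g` generates `Λ`.

Let `v = p q` and `n = q`, and let `T` be the set of the `q s` nonzero coordinates of the element
of height `s`. Outside `T` we have `n_i = p`, and on `T` we have `q ≤ n_i ≤ p q`. Averaging heights
over `x ↔ -x` gives `∑ (1 - 1 / n_i) = (p q - 1) s`. For `u s` coordinates in total this reads
`p ∑_T 1 / n_i = s + s (p - 1) (u + 1 - (p q + q))`, and the left side lies between `s` and `p s`.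
Hence `u` is `p q + q - 1` or `p q + q`, and in both cases the bounds on `n_i` are sharp throughout
`T`.
-/

/-- The class of `1 / n` in `ℝ / ℤ`; it is `0` for `n ≤ 1`. -/
noncomputable def unitFrac (n : ℕ) : UnitAddCircle :=
  ((1 / (n : ℝ) : ℝ) : UnitAddCircle)

section FractionalPart

lemma fracR_coe (r : ℝ) : fracR (r : UnitAddCircle) = Int.fract r :=
  (AddCircle.coe_equivIco_mk_apply (p := (1 : ℝ)) r).trans (by simp only [div_one, mul_one])

lemma coe_fracR (x : UnitAddCircle) : ((fracR x : ℝ) : UnitAddCircle) = x :=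
  AddCircle.coe_equivIco

lemma fracR_zero : fracR 0 = 0 := by
  rw [← AddCircle.coe_zero, fracR_coe, Int.fract_zero]

lemma fracR_nonneg (x : UnitAddCircle) : 0 ≤ fracR x := by
  rw [← coe_fracR x, fracR_coe]
  exact Int.fract_nonneg _

lemma fracR_eq_zero_iff {x : UnitAddCircle} : fracR x = 0 ↔ x = 0 :=
  ⟨fun h => by rw [← coe_fracR x, h, AddCircle.coe_zero], fun h => h ▸ fracR_zero⟩

lemma fracR_add_fracR_neg {x : UnitAddCircle} (hx : x ≠ 0) : fracR x + fracR (-x) = 1 := by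
  have hfract : Int.fract (fracR x) = fracR x := by rw [← fracR_coe, coe_fracR]
  have hneg : fracR (-x) = Int.fract (-fracR x) := by
    rw [← fracR_coe, AddCircle.coe_neg, coe_fracR]
  have hne : Int.fract (fracR x) ≠ 0 := by rwa [hfract, ne_eq, fracR_eq_zero_iff]
  rw [hneg, Int.fract_neg hne, hfract, add_sub_cancel]

lemma one_div_le_fracR {x : UnitAddCircle} (hx : x ≠ 0) {n : ℕ} (hn : 0 < n) (h : n • x = 0) :
    1 / (n : ℝ) ≤ fracR x := by
  rw [← coe_fracR x, ← AddCircle.coe_nsmul, AddCircle.coe_eq_zero_iff] at h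
  obtain ⟨z, hz⟩ := h
  simp only [zsmul_eq_mul, mul_one, nsmul_eq_mul] at hz
  have hpos : 0 < fracR x := (fracR_nonneg x).lt_of_ne' (fracR_eq_zero_iff.not.2 hx)
  have hn' : (0 : ℝ) < n := Nat.cast_pos.2 hn
  have hz0 : 0 < z := by exact_mod_cast hz ▸ mul_pos hn' hpos
  rw [div_le_iff₀' hn', ← hz]
  exact_mod_cast hz0

lemma fracR_le_one_sub_one_div {x : UnitAddCircle} {n : ℕ} (hn : 0 < n) (h : n • x = 0) :
    fracR x ≤ 1 - 1 / n := by
  obtain rfl | hx := eq_or_ne x 0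
  · rw [fracR_zero, sub_nonneg, div_le_one (Nat.cast_pos.2 hn)]
    exact_mod_cast hn
  · have := one_div_le_fracR (neg_ne_zero.2 hx) hn (by rw [smul_neg, h, neg_zero])
    linarith [fracR_add_fracR_neg hx]

lemma addOrderOf_unitFrac {n : ℕ} (hn : 0 < n) : addOrderOf (unitFrac n) = n :=
  AddCircle.addOrderOf_period_div hn

lemma two_mul_sum_fracR {G : Type*} [AddCommGroup G] [Fintype G] (φ : G →+ UnitAddCircle) :
    2 * ∑ x, fracR (φ x) = Nat.card G * (1 - 1 / Nat.card φ.range) := by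
  classical
  have hneg : ∑ x, fracR (φ x) = ∑ x, fracR (-φ x) := by
    simpa only [Equiv.neg_apply, map_neg] using
      (Equiv.sum_comp (Equiv.neg G) fun x => fracR (φ x)).symm
  have hpair (x : G) : fracR (φ x) + fracR (-φ x) = 1 - if x ∈ φ.ker then 1 else 0 := by
    split_ifs with hx
    · rw [AddMonoidHom.mem_ker.1 hx, neg_zero, fracR_zero, add_zero, sub_self]
    · rw [fracR_add_fracR_neg hx, sub_zero]
  have hker : (Nat.card φ.ker : ℝ) * Nat.card φ.range = Nat.card G := by
    rw [← AddSubgroup.index_ker]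
    exact_mod_cast φ.ker.card_mul_index
  have hrange : (Nat.card φ.range : ℝ) ≠ 0 := Nat.cast_ne_zero.2 Nat.card_pos.ne'
  calc 2 * ∑ x, fracR (φ x) = ∑ x, (fracR (φ x) + fracR (-φ x)) := by
        rw [Finset.sum_add_distrib, ← hneg, two_mul]
    _ = Nat.card G - Nat.card φ.ker := by
        simp only [hpair, Finset.sum_sub_distrib, Finset.sum_const, Finset.sum_boole,
          Finset.card_univ, nsmul_one, Nat.card_eq_fintype_card, Fintype.card_subtype]
    _ = Nat.card G * (1 - 1 / Nat.card φ.range) := by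
        rw [← hker]
        field_simp

end FractionalPart

section Height

variable {ι : Type*} {x : ι → UnitAddCircle} {n : ℕ}

lemma indicator_one_div_le_fracR (hn : 0 < n) (hx : n • x = 0) (i : ι) :
    x.support.indicator (fun _ => 1 / (n : ℝ)) i ≤ fracR (x i) :=
  Set.indicator_apply_le' (fun hi => one_div_le_fracR hi hn (congrFun hx i))
    fun _ => fracR_nonneg _

lemma addOrderOf_indicator_unitFrac {T : Set ι} (hT : T.Nonempty) (hn : 0 < n) :
    addOrderOf (T.indicator fun _ => unitFrac n) = n := by
  obtain ⟨i, hi⟩ := hT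
  refine Nat.dvd_antisymm (addOrderOf_dvd_of_nsmul_eq_zero ?_) ?_
  · have hzero : n • unitFrac n = 0 :=
      addOrderOf_dvd_iff_nsmul_eq_zero.1 (addOrderOf_unitFrac hn).dvd
    funext j
    by_cases hj : j ∈ T
    · rw [Pi.smul_apply, Set.indicator_of_mem hj, hzero, Pi.zero_apply]
    · rw [Pi.smul_apply, Set.indicator_of_notMem hj, smul_zero, Pi.zero_apply]
  · simpa only [Pi.evalAddMonoidHom_apply, Set.indicator_of_mem hi, addOrderOf_unitFrac hn] using
      addOrderOf_map_dvd (Pi.evalAddMonoidHom (fun _ => UnitAddCircle) i)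
        (T.indicator fun _ => unitFrac n)

variable [Fintype ι]

lemma ht_zero : ht (0 : ι → UnitAddCircle) = 0 :=
  Finset.sum_eq_zero fun _ _ => fracR_zero

lemma ht_add_ht_neg (x : ι → UnitAddCircle) : ht x + ht (-x) = x.support.ncard := by
  classical
  have hpair (i : ι) : fracR (x i) + fracR (-x i) = if x i ≠ 0 then 1 else 0 := by
    split_ifs with hi
    · exact fracR_add_fracR_neg hi
    · rw [not_not.1 hi, neg_zero, fracR_zero, add_zero]
  simp only [ht, Pi.neg_apply, ← Finset.sum_add_distrib, hpair, Finset.sum_boole]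
  rw [Set.ncard_eq_toFinset_card', Function.support, Set.toFinset_ofPred]

lemma sum_indicator_support (x : ι → UnitAddCircle) (r : ℝ) :
    ∑ i, x.support.indicator (fun _ => r) i = x.support.ncard * r := by
  classical
  rw [← nsmul_eq_mul, Set.ncard_eq_toFinset_card', ← Finset.sum_const,
    Finset.sum_indicator_eq_sum_filter]
  simp

lemma ncard_support_div_le_ht (hn : 0 < n) (hx : n • x = 0) :
    (x.support.ncard : ℝ) / n ≤ ht x := by
  rw [div_eq_mul_one_div, ← sum_indicator_support]
  exact Finset.sum_le_sum fun i _ => indicator_one_div_le_fracR hn hx i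

lemma eq_indicator_of_ht_eq (hn : 0 < n) (hx : n • x = 0)
    (h : ht x = (x.support.ncard : ℝ) / n) : x = x.support.indicator fun _ => unitFrac n := by
  rw [div_eq_mul_one_div, ← sum_indicator_support] at h
  have hfrac := (Finset.sum_eq_sum_iff_of_le fun i _ => indicator_one_div_le_fracR hn hx i).1 h.symm
  funext i
  by_cases hi : i ∈ x.support
  · rw [Set.indicator_of_mem hi, ← coe_fracR (x i), ← hfrac i (Finset.mem_univ i),
      Set.indicator_of_mem hi, unitFrac]
  · rw [Set.indicator_of_notMem hi, Function.notMem_support.1 hi]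

end Height

section CoordinateOrder

variable {ι : Type*}

/-- The order `n_i` of the projection of `Λ` to the `i`-th coordinate. For finite `Λ` this
projection is the cyclic group of order `n_i`, generated by `1 / n_i`. -/
noncomputable def coordOrder (Λ : AddSubgroup (ι → UnitAddCircle)) (i : ι) : ℕ :=
  Nat.card (Λ.map (Pi.evalAddMonoidHom _ i))

/-- The vector with coordinates `1 / n_i`, which need not belong to `Λ`. -/
noncomputable def coordGen (Λ : AddSubgroup (ι → UnitAddCircle)) (i : ι) : UnitAddCircle :=
  unitFrac (coordOrder Λ i)

variable {Λ : AddSubgroup (ι → UnitAddCircle)} {x : ι → UnitAddCircle}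

lemma coordOrder_pos [Finite Λ] (i : ι) : 0 < coordOrder Λ i :=
  have : Finite (Λ.map (Pi.evalAddMonoidHom _ i)) := (Λ : Set (ι → UnitAddCircle)).toFinite.image _
  Nat.card_pos

lemma coordOrder_dvd_card (i : ι) : coordOrder Λ i ∣ Nat.card Λ :=
  Λ.card_map_dvd _

lemma addOrderOf_apply_dvd_coordOrder (hx : x ∈ Λ) (i : ι) : addOrderOf (x i) ∣ coordOrder Λ i :=
  AddSubgroup.addOrderOf_dvd_natCard _ (AddSubgroup.mem_map_of_mem (Pi.evalAddMonoidHom _ i) hx)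

lemma coordOrder_nsmul_apply (hx : x ∈ Λ) (i : ι) : coordOrder Λ i • x i = 0 :=
  addOrderOf_dvd_iff_nsmul_eq_zero.1 (addOrderOf_apply_dvd_coordOrder hx i)

lemma NonPyramidal.coordOrder_ne_one [Fintype ι]
    (hnp : NonPyramidal (Λ : Set (ι → UnitAddCircle))) (i : ι) : coordOrder Λ i ≠ 1 := by
  obtain ⟨x, hx, hxi⟩ := hnp i
  intro h
  exact hxi (by rw [← one_nsmul (x i), ← h, coordOrder_nsmul_apply hx i])

lemma addOrderOf_coordGen_apply [Finite Λ] (i : ι) :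
    addOrderOf (coordGen Λ i) = coordOrder Λ i :=
  addOrderOf_unitFrac (coordOrder_pos i)

lemma addOrderOf_coordGen_nsmul [Finite Λ] (hx : x ∈ Λ) : addOrderOf (coordGen Λ) • x = 0 := by
  funext i
  have hdvd : coordOrder Λ i ∣ addOrderOf (coordGen Λ) := by
    rw [← addOrderOf_coordGen_apply]
    exact addOrderOf_map_dvd (Pi.evalAddMonoidHom (fun _ => UnitAddCircle) i) (coordGen Λ)
  exact addOrderOf_dvd_iff_nsmul_eq_zero.1 ((addOrderOf_apply_dvd_coordOrder hx i).trans hdvd)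

lemma dvd_coordOrder_of_indicator_mem {T : Set ι} {n : ℕ} (hn : 0 < n)
    (hx : T.indicator (fun _ => unitFrac n) ∈ Λ) {i : ι} (hi : i ∈ T) : n ∣ coordOrder Λ i := by
  have h := addOrderOf_apply_dvd_coordOrder hx i
  rwa [Set.indicator_of_mem hi, addOrderOf_unitFrac hn] at h

lemma eq_zmultiples_of_card_dvd_addOrderOf [Finite Λ] (hx : x ∈ Λ)
    (h : Nat.card Λ ∣ addOrderOf x) : Λ = AddSubgroup.zmultiples x := by
  refine (AddSubgroup.eq_of_le_of_card_ge (AddSubgroup.zmultiples_le_of_mem hx) ?_).symm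
  rw [Nat.card_zmultiples, Nat.dvd_antisymm (Λ.addOrderOf_dvd_natCard hx) h]

lemma eq_zmultiples_coordGen [Finite Λ] (hsq : Squarefree (Nat.card Λ)) (hg : coordGen Λ ∈ Λ) :
    Λ = AddSubgroup.zmultiples (coordGen Λ) := by
  have hpow : Nat.card Λ ∣ addOrderOf (coordGen Λ) ^ AddGroup.rank Λ :=
    card_dvd_exponent_nsmul_rank' Λ fun x => Subtype.ext (addOrderOf_coordGen_nsmul x.2)
  exact eq_zmultiples_of_card_dvd_addOrderOf hg
    ((hsq.dvd_pow_iff_dvd (AddGroup.rank Λ).succ_ne_zero).1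
      (hpow.trans (pow_dvd_pow _ (Nat.le_succ _))))

lemma two_mul_sum_ht [Fintype ι] [Fintype Λ] :
    2 * ∑ x : Λ, ht (x : ι → UnitAddCircle) =
      Nat.card Λ * ∑ i, (1 - 1 / (coordOrder Λ i : ℝ)) := by
  have hcoord (i : ι) : 2 * ∑ x : Λ, fracR ((x : ι → UnitAddCircle) i) =
      Nat.card Λ * (1 - 1 / (coordOrder Λ i : ℝ)) := by
    rw [coordOrder, ← AddMonoidHom.domRestrict_range]
    exact two_mul_sum_fracR ((Pi.evalAddMonoidHom _ i).domRestrict Λ)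
  simp only [ht]
  rw [Finset.sum_comm, Finset.mul_sum, Finset.mul_sum]
  exact Finset.sum_congr rfl fun i _ => hcoord i

end CoordinateOrder

section DeltaPolynomial

variable {ι : Type*} [Fintype ι] {Λ : AddSubgroup (ι → UnitAddCircle)} {v s p q : ℕ}

lemma one_lt_addOrderOf_of_mem {G : Type*} [AddGroup G] {H : AddSubgroup G} [Finite H] {x : G}
    (hx : x ∈ H) (hx0 : x ≠ 0) : 1 < addOrderOf x := by
  have hpos : 0 < addOrderOf x := by
    rw [← AddSubgroup.addOrderOf_mk x hx]
    exact addOrderOf_pos _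
  exact lt_of_le_of_ne hpos (Ne.symm (mt AddMonoid.addOrderOf_eq_one_iff.1 hx0))

namespace HasDeltaPoly

lemma pos (hΛ : HasDeltaPoly v s (Λ : Set (ι → UnitAddCircle))) : 0 < v :=
  have ⟨_, hj, _⟩ := hΛ.mapsTo Λ.zero_mem
  Nat.zero_lt_of_lt hj

lemma exists_equiv_fin (hΛ : HasDeltaPoly v s (Λ : Set (ι → UnitAddCircle))) (hs : 0 < s) :
    ∃ e : Λ ≃ Fin v, ∀ x : Λ, ht (x : ι → UnitAddCircle) = (e x : ℕ) * (s : ℝ) := by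
  have hindex (x : Λ) : ∃ j : Fin v, ht (x : ι → UnitAddCircle) = (j : ℕ) * (s : ℝ) := by
    obtain ⟨j, hj, hxj⟩ := hΛ.mapsTo x.2
    exact ⟨⟨j, hj⟩, hxj⟩
  choose f hf using hindex
  refine ⟨Equiv.ofBijective f ⟨fun x y hxy => ?_, fun j => ?_⟩, hf⟩
  · exact Subtype.ext (hΛ.injOn x.2 y.2 (by rw [hf, hf, hxy]))
  · obtain ⟨x, hx, hxj⟩ := hΛ.surjOn ⟨j, j.2, rfl⟩
    have hs' : (s : ℝ) ≠ 0 := Nat.cast_ne_zero.2 hs.ne'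
    exact ⟨⟨x, hx⟩, Fin.ext (Nat.cast_injective (mul_right_cancel₀ hs' ((hf _).symm.trans hxj)))⟩

lemma finite (hΛ : HasDeltaPoly v s (Λ : Set (ι → UnitAddCircle))) (hs : 0 < s) : Finite Λ :=
  have ⟨e, _⟩ := hΛ.exists_equiv_fin hs
  Finite.of_equiv _ e.symm

lemma card_eq (hΛ : HasDeltaPoly v s (Λ : Set (ι → UnitAddCircle))) (hs : 0 < s) :
    Nat.card Λ = v := by
  obtain ⟨e, -⟩ := hΛ.exists_equiv_fin hs
  rw [Nat.card_congr e, Nat.card_fin]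

lemma le_ht (hΛ : HasDeltaPoly v s (Λ : Set (ι → UnitAddCircle))) {x : ι → UnitAddCircle}
    (hx : x ∈ Λ) (hx0 : x ≠ 0) : (s : ℝ) ≤ ht x := by
  obtain ⟨j, -, hxj⟩ := hΛ.mapsTo hx
  have hj : j ≠ 0 := fun hj =>
    hx0 (hΛ.injOn hx Λ.zero_mem (by rw [hxj, hj, ht_zero, Nat.cast_zero, zero_mul]))
  rw [hxj]
  exact le_mul_of_one_le_left s.cast_nonneg (by exact_mod_cast Nat.one_le_iff_ne_zero.2 hj)

lemma exists_card_sub_one_mul_le_ht (hΛ : HasDeltaPoly v s (Λ : Set (ι → UnitAddCircle)))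
    (hs : 0 < s) {H : AddSubgroup (ι → UnitAddCircle)} (hH : H ≤ Λ) :
    ∃ y ∈ H, ((Nat.card H : ℝ) - 1) * s ≤ ht y := by
  have := hΛ.finite hs
  have : Finite H := Finite.of_injective _ (AddSubgroup.inclusion_injective hH)
  obtain ⟨e, he⟩ := hΛ.exists_equiv_fin hs
  by_contra! hlt
  have hindex (y : H) : (e (AddSubgroup.inclusion hH y) : ℕ) < Nat.card H - 1 := by
    have h := hlt y y.2
    rw [← AddSubgroup.coe_inclusion (h := hH) y, he] at h
    have := lt_of_mul_lt_mul_right h s.cast_nonneg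
    rw [lt_sub_iff_add_lt] at this
    exact Nat.lt_sub_of_add_lt (by exact_mod_cast this)
  have hinj : Function.Injective fun y : H => (⟨_, hindex y⟩ : Fin (Nat.card H - 1)) :=
    fun y z hyz =>
      AddSubgroup.inclusion_injective hH (e.injective (Fin.ext (Fin.mk.inj hyz)))
  have hcard := Nat.card_le_card_of_injective _ hinj
  rw [Nat.card_fin] at hcard
  have : 0 < Nat.card H := Nat.card_pos
  omega

lemma addOrderOf_mul_le_ncard_support (hΛ : HasDeltaPoly v s (Λ : Set (ι → UnitAddCircle)))
    (hs : 0 < s) {x : ι → UnitAddCircle} (hx : x ∈ Λ) (hx0 : x ≠ 0) :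
    addOrderOf x * s ≤ x.support.ncard := by
  have := hΛ.finite hs
  have hle := AddSubgroup.zmultiples_le_of_mem hx
  obtain ⟨y, hy, hyx⟩ := hΛ.exists_card_sub_one_mul_le_ht hs hle
  rw [Nat.card_zmultiples] at hyx
  have hsupp : y.support ⊆ x.support := by
    obtain ⟨m, rfl⟩ := AddSubgroup.mem_zmultiples_iff.1 hy
    exact Function.support_const_smul_subset m x
  have hx1 := one_lt_addOrderOf_of_mem hx hx0
  have hy0 : y ≠ 0 := by
    rintro rfl
    rw [ht_zero] at hyx
    exact absurd hyx (not_le.2 (mul_pos (sub_pos.2 (by exact_mod_cast hx1)) (Nat.cast_pos.2 hs)))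
  have hyneg := hΛ.le_ht (Λ.neg_mem (hle hy)) (neg_ne_zero.2 hy0)
  have : (addOrderOf x : ℝ) * s ≤ x.support.ncard :=
    calc (addOrderOf x : ℝ) * s ≤ ht y + ht (-y) := by linarith
      _ = y.support.ncard := ht_add_ht_neg y
      _ ≤ x.support.ncard := by exact_mod_cast Set.ncard_le_ncard hsupp
  exact_mod_cast this

lemma exists_indicator_unitFrac_mem (hΛ : HasDeltaPoly v s (Λ : Set (ι → UnitAddCircle)))
    (hs : 0 < s) (hv : 1 < v) :
    ∃ n > 1, n ∣ v ∧ ∃ T : Finset ι,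
      T.card = n * s ∧ (T : Set ι).indicator (fun _ => unitFrac n) ∈ Λ := by
  classical
  have := hΛ.finite hs
  obtain ⟨x, hx, hxs⟩ := hΛ.surjOn ⟨1, hv, rfl⟩
  rw [Nat.cast_one, one_mul] at hxs
  have hx0 : x ≠ 0 := by
    rintro rfl
    rw [ht_zero] at hxs
    exact (Nat.cast_pos.2 hs).ne hxs
  have hn := one_lt_addOrderOf_of_mem hx hx0
  have hzero := addOrderOf_nsmul_eq_zero x
  have hn' : (0 : ℝ) < addOrderOf x := Nat.cast_pos.2 (zero_lt_one.trans hn)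
  have hle := ncard_support_div_le_ht (zero_lt_one.trans hn) hzero
  rw [hxs, div_le_iff₀' hn'] at hle
  have hcard : x.support.ncard = addOrderOf x * s :=
    le_antisymm (by exact_mod_cast hle) (hΛ.addOrderOf_mul_le_ncard_support hs hx hx0)
  have hind := eq_indicator_of_ht_eq (zero_lt_one.trans hn) hzero
    (by rw [hxs, hcard, Nat.cast_mul, mul_div_cancel_left₀ _ hn'.ne'])
  refine ⟨addOrderOf x, hn, hΛ.card_eq hs ▸ Λ.addOrderOf_dvd_natCard hx, x.support.toFinset,
    by rwa [← Set.ncard_eq_toFinset_card'], ?_⟩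
  rwa [Set.coe_toFinset, ← hind]

lemma sum_one_sub_one_div_coordOrder (hΛ : HasDeltaPoly v s (Λ : Set (ι → UnitAddCircle)))
    (hs : 0 < s) : ∑ i, (1 - 1 / (coordOrder Λ i : ℝ)) = ((v : ℝ) - 1) * s := by
  have hv := hΛ.pos
  have := hΛ.finite hs
  have := Fintype.ofFinite Λ
  obtain ⟨e, he⟩ := hΛ.exists_equiv_fin hs
  have hgauss : (∑ j ∈ Finset.range v, (j : ℝ)) * 2 = v * ((v : ℝ) - 1) := by
    rw [← Nat.cast_pred hv, ← Nat.cast_sum, ← Nat.cast_ofNat (R := ℝ) (n := 2), ← Nat.cast_mul,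
      ← Nat.cast_mul, Finset.sum_range_id_mul_two]
  have hsum : ∑ x : Λ, ht (x : ι → UnitAddCircle) = (∑ j ∈ Finset.range v, (j : ℝ)) * s := by
    rw [Finset.sum_congr rfl fun x _ => he x, Equiv.sum_comp e fun j : Fin v => ((j : ℕ) : ℝ) * s,
      ← Finset.sum_mul, Fin.sum_univ_eq_sum_range fun j : ℕ => (j : ℝ)]
  have havg := two_mul_sum_ht (Λ := Λ)
  rw [hsum, hΛ.card_eq hs] at havg
  apply mul_left_cancel₀ (Nat.cast_ne_zero.2 hv.ne' : (v : ℝ) ≠ 0)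
  linear_combination (s : ℝ) * hgauss - havg

lemma coordGen_mem (hΛ : HasDeltaPoly v s (Λ : Set (ι → UnitAddCircle))) (hs : 0 < s) :
    coordGen Λ ∈ Λ := by
  have hv := hΛ.pos
  have := hΛ.finite hs
  obtain ⟨z, hz, hzv⟩ := hΛ.surjOn ⟨v - 1, Nat.sub_one_lt_of_lt hv, rfl⟩
  rw [Nat.cast_pred hv, ← hΛ.sum_one_sub_one_div_coordOrder hs, ht] at hzv
  have hfrac := (Finset.sum_eq_sum_iff_of_le fun i _ =>
    fracR_le_one_sub_one_div (coordOrder_pos i) (coordOrder_nsmul_apply hz i)).1 hzv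
  have hneg : coordGen Λ = -z := by
    funext i
    rw [Pi.neg_apply, ← coe_fracR (z i), hfrac i (Finset.mem_univ i), AddCircle.coe_sub,
      AddCircle.coe_period, zero_sub, neg_neg, coordGen, unitFrac]
  exact hneg ▸ Λ.neg_mem hz

lemma dvd_card_index (hΛ : HasDeltaPoly v s (Λ : Set (ι → UnitAddCircle)))
    (hnp : NonPyramidal (Λ : Set (ι → UnitAddCircle))) (hs : 0 < s) :
    s ∣ Fintype.card ι := by
  have := hΛ.finite hs
  have hg := hΛ.coordGen_mem hs
  have hfull : (coordGen Λ).support = Set.univ := Set.eq_univ_of_forall fun i hi =>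
    hnp.coordOrder_ne_one i (by rw [← addOrderOf_coordGen_apply, hi, addOrderOf_zero])
  have hsum := ht_add_ht_neg (coordGen Λ)
  obtain ⟨a, -, ha⟩ := hΛ.mapsTo hg
  obtain ⟨b, -, hb⟩ := hΛ.mapsTo (Λ.neg_mem hg)
  rw [ha, hb, hfull, Set.ncard_univ, Nat.card_eq_fintype_card, ← add_mul, mul_comm] at hsum
  exact ⟨a + b, by exact_mod_cast hsum.symm⟩

lemma card_index_eq_and_eq_zmultiples (hΛ : HasDeltaPoly v s (Λ : Set (ι → UnitAddCircle)))
    (hnp : NonPyramidal (Λ : Set (ι → UnitAddCircle))) (hs : 0 < s) {T : Finset ι}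
    (hT : T.card = v * s) (hx : (T : Set ι).indicator (fun _ => unitFrac v) ∈ Λ) :
    Fintype.card ι = v * s ∧ Λ = AddSubgroup.zmultiples fun _ => unitFrac v := by
  have := hΛ.finite hs
  have hTne : T.Nonempty := Finset.card_pos.1 (hT ▸ Nat.mul_pos hΛ.pos hs)
  have hgen := eq_zmultiples_of_card_dvd_addOrderOf hx
    (by rw [hΛ.card_eq hs, addOrderOf_indicator_unitFrac hTne hΛ.pos])
  have huniv : T = Finset.univ := Finset.eq_univ_of_forall fun i => by
    obtain ⟨y, hy, hyi⟩ := hnp i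
    rw [SetLike.mem_coe, hgen] at hy
    obtain ⟨m, rfl⟩ := AddSubgroup.mem_zmultiples_iff.1 hy
    exact Set.mem_of_indicator_ne_zero (Function.support_const_smul_subset m _ hyi)
  rw [huniv, Finset.coe_univ, Set.indicator_univ] at hgen
  exact ⟨by rw [← hT, huniv, Finset.card_univ], hgen⟩

lemma coordOrder_eq_of_notMem (hΛ : HasDeltaPoly (p * q) s (Λ : Set (ι → UnitAddCircle)))
    (hnp : NonPyramidal (Λ : Set (ι → UnitAddCircle))) (hs : 0 < s) (hp : p.Prime)
    {T : Set ι} (hT : T.Nonempty) (hx : T.indicator (fun _ => unitFrac q) ∈ Λ) {i : ι}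
    (hi : i ∉ T) : coordOrder Λ i = p := by
  have := hΛ.finite hs
  have hq : 0 < q := Nat.pos_of_mul_pos_left hΛ.pos
  set H := AddSubgroup.zmultiples (T.indicator fun _ => unitFrac q)
  have hindex : H.relIndex Λ = p := by
    have h := AddSubgroup.relIndex_mul_relIndex ⊥ H Λ bot_le (AddSubgroup.zmultiples_le_of_mem hx)
    rw [AddSubgroup.relIndex_bot_left, AddSubgroup.relIndex_bot_left, hΛ.card_eq hs,
      Nat.card_zmultiples, addOrderOf_indicator_unitFrac hT hq, mul_comm p] at h
    exact Nat.eq_of_mul_eq_mul_left hq h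
  have hmem : p • coordGen Λ ∈ H :=
    hindex ▸ H.nsmul_relIndex_mem (hΛ.coordGen_mem hs)
  obtain ⟨m, hm⟩ := AddSubgroup.mem_zmultiples_iff.1 hmem
  have hzero : p • coordGen Λ i = 0 := by
    rw [← Pi.smul_apply, ← hm, Pi.smul_apply, Set.indicator_of_notMem hi, smul_zero]
  refine ((Nat.dvd_prime hp).1 ?_).resolve_left (hnp.coordOrder_ne_one i)
  rw [← addOrderOf_coordGen_apply]
  exact addOrderOf_dvd_of_nsmul_eq_zero hzero

lemma mul_sum_one_div_coordOrder {u : ℕ}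
    (hΛ : HasDeltaPoly (p * q) s (Λ : Set (ι → UnitAddCircle))) (hs : 0 < s)
    (hu : Fintype.card ι = u * s) {T : Finset ι} (hT : T.card = q * s)
    (hcompl : ∀ i ∉ T, coordOrder Λ i = p) :
    (p : ℝ) * ∑ i ∈ T, 1 / (coordOrder Λ i : ℝ) =
      s + s * (p - 1) * (u + 1 - (p * q + q)) := by
  classical
  have hp : 0 < p := Nat.pos_of_mul_pos_right hΛ.pos
  have hsum := hΛ.sum_one_sub_one_div_coordOrder hs
  have hcard : (Tᶜ.card : ℝ) = u * s - q * s := by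
    rw [Finset.card_compl, Nat.cast_sub T.card_le_univ, hu, hT, Nat.cast_mul, Nat.cast_mul]
  have hout : (p : ℝ) * ∑ i ∈ Tᶜ, 1 / (coordOrder Λ i : ℝ) = u * s - q * s := by
    rw [Finset.sum_congr rfl fun i hi => by rw [hcompl i (Finset.mem_compl.1 hi)],
      Finset.sum_const, nsmul_eq_mul, hcard]
    field_simp
  rw [Finset.sum_sub_distrib, Finset.sum_const, Finset.card_univ, nsmul_one, hu,
    ← Finset.sum_add_sum_compl T, Nat.cast_mul, Nat.cast_mul] at hsum
  linear_combination -(p : ℝ) * hsum - hout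

lemma mul_add_le_quotient_add_one {u : ℕ}
    (hΛ : HasDeltaPoly (p * q) s (Λ : Set (ι → UnitAddCircle))) (hs : 0 < s) (hp : 1 < p)
    (hu : Fintype.card ι = u * s) {T : Finset ι} (hT : T.card = q * s)
    (hcompl : ∀ i ∉ T, coordOrder Λ i = p) :
    p * q + q ≤ u + 1 ∧ (u + 1 = p * q + q → ∀ i ∈ T, coordOrder Λ i = p * q) := by
  have := hΛ.finite hs
  have hp0 : 0 < p := zero_lt_one.trans hp
  have hq : 0 < q := Nat.pos_of_mul_pos_left hΛ.pos
  have hle : ∀ i ∈ T, 1 / ((p * q : ℕ) : ℝ) ≤ 1 / coordOrder Λ i := fun i _ =>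
    one_div_le_one_div_of_le (Nat.cast_pos.2 (coordOrder_pos i))
      (Nat.cast_le.2 (Nat.le_of_dvd hΛ.pos (hΛ.card_eq hs ▸ coordOrder_dvd_card i)))
  have hconst : (p : ℝ) * ∑ i ∈ T, 1 / ((p * q : ℕ) : ℝ) = s := by
    rw [Finset.sum_const, hT, nsmul_eq_mul, Nat.cast_mul, Nat.cast_mul]
    field_simp
  have hsum := hΛ.mul_sum_one_div_coordOrder hs hu hT hcompl
  have hp' : (0 : ℝ) < p := Nat.cast_pos.2 hp0
  have hsp : (0 : ℝ) < s * (p - 1) :=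
    mul_pos (Nat.cast_pos.2 hs) (sub_pos.2 (Nat.one_lt_cast.2 hp))
  constructor
  · have h := mul_le_mul_of_nonneg_left (Finset.sum_le_sum hle) hp'.le
    rw [hconst, hsum, le_add_iff_nonneg_right, mul_nonneg_iff_of_pos_left hsp, sub_nonneg] at h
    exact_mod_cast h
  · intro hmin i hi
    have hmin' : (u : ℝ) + 1 = p * q + q := by exact_mod_cast hmin
    have heq := (Finset.sum_eq_sum_iff_of_le hle).1 (mul_left_cancel₀ hp'.ne'
      (by rw [hconst, hsum, hmin', sub_self, mul_zero, add_zero])) i hi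
    exact_mod_cast (eq_of_one_div_eq_one_div heq).symm

lemma quotient_le_mul_add {u : ℕ}
    (hΛ : HasDeltaPoly (p * q) s (Λ : Set (ι → UnitAddCircle))) (hs : 0 < s) (hp : 1 < p)
    (hu : Fintype.card ι = u * s) {T : Finset ι} (hT : T.card = q * s)
    (hx : (T : Set ι).indicator (fun _ => unitFrac q) ∈ Λ)
    (hcompl : ∀ i ∉ T, coordOrder Λ i = p) :
    u ≤ p * q + q ∧ (u = p * q + q → ∀ i ∈ T, coordOrder Λ i = q) := by
  have := hΛ.finite hs
  have hp0 : 0 < p := zero_lt_one.trans hp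
  have hq : 0 < q := Nat.pos_of_mul_pos_left hΛ.pos
  have hle : ∀ i ∈ T, 1 / (coordOrder Λ i : ℝ) ≤ 1 / q := fun i hi =>
    one_div_le_one_div_of_le (Nat.cast_pos.2 hq)
      (Nat.cast_le.2 (Nat.le_of_dvd (coordOrder_pos i) (dvd_coordOrder_of_indicator_mem hq hx hi)))
  have hconst : (p : ℝ) * ∑ i ∈ T, 1 / (q : ℝ) = s + s * (p - 1) * 1 := by
    rw [Finset.sum_const, hT, nsmul_eq_mul, Nat.cast_mul]
    field_simp
    ring
  have hsum := hΛ.mul_sum_one_div_coordOrder hs hu hT hcompl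
  have hp' : (0 : ℝ) < p := Nat.cast_pos.2 hp0
  have hsp : (0 : ℝ) < s * (p - 1) :=
    mul_pos (Nat.cast_pos.2 hs) (sub_pos.2 (Nat.one_lt_cast.2 hp))
  constructor
  · have h := mul_le_mul_of_nonneg_left (Finset.sum_le_sum hle) hp'.le
    rw [hconst, hsum, add_le_add_iff_left, mul_le_mul_iff_of_pos_left hsp, sub_le_iff_le_add',
      add_le_add_iff_right] at h
    exact_mod_cast h
  · rintro rfl i hi
    have heq := (Finset.sum_eq_sum_iff_of_le hle).1 (mul_left_cancel₀ hp'.ne'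
      (by rw [hconst, hsum]; push_cast; ring)) i hi
    exact_mod_cast eq_of_one_div_eq_one_div heq

lemma card_index_and_coordOrder_cases (hΛ : HasDeltaPoly (p * q) s (Λ : Set (ι → UnitAddCircle)))
    (hnp : NonPyramidal (Λ : Set (ι → UnitAddCircle))) (hs : 0 < s) (hp : p.Prime)
    {T : Finset ι} (hT : T.card = q * s)
    (hx : (T : Set ι).indicator (fun _ => unitFrac q) ∈ Λ) :
    (Fintype.card ι = (p * q + q) * s ∧
      ∀ i, (i ∈ T → coordOrder Λ i = q) ∧ (i ∉ T → coordOrder Λ i = p)) ∨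
    (Fintype.card ι = (p * q + q - 1) * s ∧
      ∀ i, (i ∈ T → coordOrder Λ i = p * q) ∧ (i ∉ T → coordOrder Λ i = p)) := by
  obtain ⟨u, hu⟩ := hΛ.dvd_card_index hnp hs
  rw [mul_comm] at hu
  have hTne : T.Nonempty := Finset.card_pos.1 (hT ▸ Nat.mul_pos (Nat.pos_of_mul_pos_left hΛ.pos) hs)
  have hcompl : ∀ i ∉ T, coordOrder Λ i = p := fun i hi =>
    hΛ.coordOrder_eq_of_notMem hnp hs hp hTne hx hi
  obtain ⟨hlower, hmin⟩ := hΛ.mul_add_le_quotient_add_one hs hp.one_lt hu hT hcompl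
  obtain ⟨hupper, hmax⟩ := hΛ.quotient_le_mul_add hs hp.one_lt hu hT hx hcompl
  obtain h | h : u = p * q + q ∨ u + 1 = p * q + q := by omega
  · exact .inl ⟨h ▸ hu, fun i => ⟨hmax h i, hcompl i⟩⟩
  · exact .inr ⟨(Nat.eq_sub_of_add_eq h) ▸ hu, fun i => ⟨hmin h i, hcompl i⟩⟩

end HasDeltaPoly

end DeltaPolynomial

section Permutation

lemma exists_perm_lt_card_iff {m : ℕ} (S : Finset (Fin m)) :
    ∃ σ : Equiv.Perm (Fin m), ∀ i, (σ i : ℕ) < S.card ↔ i ∈ S := by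
  have hcard : Fintype.card S = Fintype.card {i : Fin m // (i : ℕ) < S.card} := by
    rw [Fintype.card_coe, Fintype.card_subtype, Fin.card_filter_val_lt,
      min_eq_right (card_finset_fin_le S)]
  let e := Fintype.equivOfCardEq hcard
  exact ⟨e.extendSubtype, fun i =>
    ⟨not_imp_not.1 (e.extendSubtype_not_mem i), e.extendSubtype_mem i⟩⟩

lemma exists_perm_coordGen_eq {m a b : ℕ} {Λ : AddSubgroup (Fin m → UnitAddCircle)}
    {S : Finset (Fin m)}
    (h : ∀ i, (i ∈ S → coordOrder Λ i = a) ∧ (i ∉ S → coordOrder Λ i = b)) :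
    ∃ σ : Equiv.Perm (Fin m), coordGen Λ =
      fun i => if (σ i : ℕ) < S.card then unitFrac a else unitFrac b := by
  obtain ⟨σ, hσ⟩ := exists_perm_lt_card_iff S
  refine ⟨σ, funext fun i => ?_⟩
  simp only [hσ i]
  split_ifs with hi
  · rw [coordGen, (h i).1 hi]
  · rw [coordGen, (h i).2 hi]

lemma HasDeltaPoly.exists_perm_eq_zmultiples {m s p q v : ℕ}
    {Λ : AddSubgroup (Fin m → UnitAddCircle)}
    (hΛ : HasDeltaPoly v s (Λ : Set (Fin m → UnitAddCircle)))
    (hnp : NonPyramidal (Λ : Set (Fin m → UnitAddCircle))) (hs : 0 < s) (hv : v = p * q)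
    (hp : p.Prime) (hsq : Squarefree v) {T : Finset (Fin m)} (hT : T.card = q * s)
    (hx : (T : Set (Fin m)).indicator (fun _ => unitFrac q) ∈ Λ) :
    (m = (v + q) * s ∧ ∃ σ : Equiv.Perm (Fin m), Λ = AddSubgroup.zmultiples fun i =>
      if (σ i : ℕ) < q * s then unitFrac q else unitFrac p) ∨
    (m = (v + q - 1) * s ∧ ∃ σ : Equiv.Perm (Fin m), Λ = AddSubgroup.zmultiples fun i =>
      if (σ i : ℕ) < (v - 1) * s then unitFrac p else unitFrac v) := by
  have := hΛ.finite hs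
  have hgen := eq_zmultiples_coordGen ((hΛ.card_eq hs).symm ▸ hsq) (hΛ.coordGen_mem hs)
  subst hv
  obtain ⟨hm, h⟩ | ⟨hm, h⟩ :=
    hΛ.card_index_and_coordOrder_cases hnp hs hp hT hx <;>
    rw [Fintype.card_fin] at hm
  · obtain ⟨σ, hσ⟩ := exists_perm_coordGen_eq h
    exact .inl ⟨hm, σ, by rwa [hσ, hT] at hgen⟩
  · have hcompl (i : Fin m) :
        (i ∈ Tᶜ → coordOrder Λ i = p) ∧ (i ∉ Tᶜ → coordOrder Λ i = p * q) := by
      simpa only [Finset.mem_compl, not_not] using (h i).symm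
    obtain ⟨σ, hσ⟩ := exists_perm_coordGen_eq hcompl
    have hcard : Tᶜ.card = (p * q - 1) * s := by
      rw [Finset.card_compl, Fintype.card_fin, hT]
      exact Nat.sub_eq_of_eq_add (by rw [← add_mul, tsub_add_eq_add_tsub hΛ.pos, ← hm])
    exact .inr ⟨hm, σ, by rwa [hσ, hcard] at hgen⟩

end Permutation

theorem stmt_8 (p q k d : ℕ) (hp : p.Prime) (hq : q.Prime) (hpq : p ≠ q)
    (Λ : AddSubgroup (Fin (d+1) → AddCircle (1:ℝ)))
    (hfin : (Λ : Set (Fin (d+1) → AddCircle (1:ℝ))).Finite)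
    (hnp : NonPyramidal (Λ : Set (Fin (d+1) → AddCircle (1:ℝ))))
    (hΛ : HasDeltaPoly (p*q) (k+1) (Λ : Set (Fin (d+1) → AddCircle (1:ℝ)))) :
    (d = p*q*(k+1) - 1 ∧
      Λ = AddSubgroup.zmultiples
        (fun _ : Fin (d+1) => ((1 / ((p:ℝ)*(q:ℝ)) : ℝ) : AddCircle (1:ℝ)))) ∨
    (d = p*(q+1)*(k+1) - 1 ∧
      ∃ σ : Equiv.Perm (Fin (d+1)),
        Λ = AddSubgroup.zmultiples
          (fun i : Fin (d+1) =>
            if ((σ i : ℕ)) < p*(k+1)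
            then ((1 / (p:ℝ) : ℝ) : AddCircle (1:ℝ))
            else ((1 / (q:ℝ) : ℝ) : AddCircle (1:ℝ)))) ∨
    (d = (p+1)*q*(k+1) - 1 ∧
      ∃ σ : Equiv.Perm (Fin (d+1)),
        Λ = AddSubgroup.zmultiples
          (fun i : Fin (d+1) =>
            if ((σ i : ℕ)) < q*(k+1)
            then ((1 / (q:ℝ) : ℝ) : AddCircle (1:ℝ))
            else ((1 / (p:ℝ) : ℝ) : AddCircle (1:ℝ)))) ∨
    (d = (p*q + p - 1)*(k+1) - 1 ∧
      ∃ σ : Equiv.Perm (Fin (d+1)),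
        Λ = AddSubgroup.zmultiples
          (fun i : Fin (d+1) =>
            if ((σ i : ℕ)) < (p*q - 1)*(k+1)
            then ((1 / (q:ℝ) : ℝ) : AddCircle (1:ℝ))
            else ((1 / ((p:ℝ)*(q:ℝ)) : ℝ) : AddCircle (1:ℝ)))) ∨
    (d = (p*q + q - 1)*(k+1) - 1 ∧
      ∃ σ : Equiv.Perm (Fin (d+1)),
        Λ = AddSubgroup.zmultiples
          (fun i : Fin (d+1) =>
            if ((σ i : ℕ)) < (p*q - 1)*(k+1)
            then ((1 / (p:ℝ) : ℝ) : AddCircle (1:ℝ))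
            else ((1 / ((p:ℝ)*(q:ℝ)) : ℝ) : AddCircle (1:ℝ)))) := by
  have hs := k.succ_pos
  have hsq : Squarefree (p * q) := Nat.squarefree_mul_iff.2
    ⟨(Nat.coprime_primes hp hq).2 hpq, hp.squarefree, hq.squarefree⟩
  obtain ⟨n, hn, hdvd, T, hT, hx⟩ := hΛ.exists_indicator_unitFrac_mem hs
    (Nat.one_lt_mul_iff.2 ⟨hp.pos, hq.pos, .inl hp.one_lt⟩)
  have hcases : n = p * q ∨ n = p ∨ n = q := by
    obtain ⟨a, b, ha, hb, rfl⟩ := Nat.dvd_mul.1 hdvd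
    rcases (Nat.dvd_prime hp).1 ha with rfl | rfl <;>
      rcases (Nat.dvd_prime hq).1 hb with rfl | rfl <;> simp_all
  rcases hcases with h | h | h <;> subst n
  · obtain ⟨hd, hgen⟩ := hΛ.card_index_eq_and_eq_zmultiples hnp hs hT hx
    rw [Fintype.card_fin] at hd
    exact .inl ⟨Nat.eq_sub_of_add_eq hd, by simpa only [unitFrac, Nat.cast_mul] using hgen⟩
  · rcases hΛ.exists_perm_eq_zmultiples hnp hs (mul_comm p q) hq hsq hT hx with h | h <;>
      obtain ⟨hd, hgen⟩ := h <;> simp only [unitFrac, Nat.cast_mul] at hgen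
    · exact .inr (.inl ⟨Nat.eq_sub_of_add_eq (by rw [hd]; ring), hgen⟩)
    · exact .inr (.inr (.inr (.inl ⟨Nat.eq_sub_of_add_eq hd, hgen⟩)))
  · rcases hΛ.exists_perm_eq_zmultiples hnp hs rfl hp hsq hT hx with h | h <;>
      obtain ⟨hd, hgen⟩ := h <;> simp only [unitFrac, Nat.cast_mul] at hgen
    · exact .inr (.inr (.inl ⟨Nat.eq_sub_of_add_eq (by rw [hd]; ring), hgen⟩))
    · exact .inr (.inr (.inr (.inr ⟨Nat.eq_sub_of_add_eq hd, hgen⟩)))
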